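/- Let f ∈ ℂ[X₀,X₁] be homogeneous of degree d ≥ 4 and squarefree, and let F = Y^d − f(X₀,X₁) ∈ ℂ[Y,X₀,X₁]. Then there exist a homogeneous h ∈ S^{2d−4} with Y·h ∉ J_F, and a bilinear map λ : S^d × S^{d−4} → ℂ, such that: (1) for all u ∈ S^d and v ∈ S^{d−4}, u·Y·v − λ(u,v)·Y·h ∈ J_F; (2) for u ∈ S^d, λ(u,v) = 0 for all v ∈ S^{d−4} if and only if u ∈ J_f; (3) for v ∈ S^{d−4}, λ(u,v) = 0 for all u ∈ S^d if and only if v = 0. -/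

import Mathlib

open MvPolynomial

/-- The Jacobian ideal of a binary form `f ∈ ℂ[X₀,X₁] = S`: the ideal generated by the two
partial derivatives of `f`. -/
noncomputable def jacIdealS (f : MvPolynomial (Fin 2) ℂ) : Ideal (MvPolynomial (Fin 2) ℂ) :=
  Ideal.span {pderiv 0 f, pderiv 1 f}

/-- The inclusion `S = ℂ[X₀,X₁] → T = ℂ[Y,X₀,X₁]`, where the variable `Y` of `T` is indexed
by `0` and `X₀, X₁` by `1, 2`. -/
noncomputable def embS : MvPolynomial (Fin 2) ℂ →ₐ[ℂ] MvPolynomial (Fin 3) ℂ :=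
  rename Fin.succ

/-- `F = Y^d − f(X₀,X₁) ∈ T = ℂ[Y,X₀,X₁]`. -/
noncomputable def bigF (d : ℕ) (f : MvPolynomial (Fin 2) ℂ) : MvPolynomial (Fin 3) ℂ :=
  X 0 ^ d - embS f

/-- The Jacobian ideal `J_F ⊆ T` of `F = Y^d − f`: the ideal generated by the three partial
derivatives `∂F/∂Y = d·Y^{d−1}`, `∂F/∂X₀ = −∂f/∂X₀`, `∂F/∂X₁ = −∂f/∂X₁`. -/
noncomputable def jacIdealT (d : ℕ) (f : MvPolynomial (Fin 2) ℂ) :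
    Ideal (MvPolynomial (Fin 3) ℂ) :=
  Ideal.span {pderiv 0 (bigF d f), pderiv 1 (bigF d f), pderiv 2 (bigF d f)}

/-!
By Euler's formula a common prime factor of the partial derivatives `a`, `b` of `f` would divide `f`
twice, so `a`, `b` are coprime forms of degree `d - 1`. A form of degree below `deg a + deg b - 2`
whose multiples by two of the variables lie in `(a, b)` lies itself in `(a, b)`, and
`S^k ∩ (a) ∩ (b) = 0` for `k = deg a + deg b - 2` shows that `(a, b)` has codimension one in `S^k`.
A functional on `S^k` with kernel `(a, b)`, composed with multiplication, is then a pairing of `S^i`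
and `S^(k - i)` whose radicals are the degree parts of `(a, b)`; for `k = 2d - 4` and `i = d` the
right radical is zero because `d - 4 < d - 1`. Finally, `Y * p ∈ J_F` if and only if `p ∈ J_f`,
since for `j < d - 1` the `Y^j`-coefficient of every element of `J_F` lies in `J_f`.
-/

section Derivative

variable {σ R : Type*} [CommRing R]

theorem totalDegree_pderiv_lt {p : MvPolynomial σ R} {i : σ} (h : pderiv i p ≠ 0) :
    (pderiv i p).totalDegree < p.totalDegree := by
  obtain ⟨s, hs, hdeg⟩ := (pderiv i p).support.exists_mem_eq_sup (support_nonempty.2 h)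
    fun t ↦ t.sum fun _ e ↦ e
  have hmem : s + Finsupp.single i 1 ∈ p.support := by
    rw [mem_support_iff, coeff_pderiv] at hs
    exact mem_support_iff.2 (left_ne_zero_of_mul hs)
  calc (pderiv i p).totalDegree = s.sum fun _ e ↦ e := hdeg
    _ < (s + Finsupp.single i 1).sum fun _ e ↦ e := by
      rw [Finsupp.sum_add_index' (fun _ ↦ rfl) (fun _ _ _ ↦ rfl), Finsupp.sum_single_index rfl]
      exact Nat.lt_succ_self _
    _ ≤ p.totalDegree := le_totalDegree hmem

theorem pderiv_eq_zero_of_dvd_pderiv [IsDomain R] {p : MvPolynomial σ R} {i : σ}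
    (h : p ∣ pderiv i p) : pderiv i p = 0 := by
  by_contra hne
  exact (totalDegree_pderiv_lt hne).not_ge (totalDegree_le_of_dvd_of_isDomain h hne)

theorem eq_C_of_pderiv_eq_zero [IsDomain R] [CharZero R] {p : MvPolynomial σ R}
    (h : ∀ i, pderiv i p = 0) : p = C (coeff 0 p) := by
  classical
  ext s
  rw [coeff_C]
  split_ifs with hs
  · rw [hs]
  obtain ⟨i, hi⟩ : ∃ i, s i ≠ 0 := by
    simpa [eq_comm, Finsupp.ext_iff] using hs
  have hcancel : s - Finsupp.single i 1 + Finsupp.single i 1 = s :=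
    tsub_add_cancel_of_le (Finsupp.single_le_iff.2 (Nat.one_le_iff_ne_zero.2 hi))
  have hcoeff := coeff_pderiv (i := i) p (s - Finsupp.single i 1)
  rw [hcancel, h i, coeff_zero] at hcoeff
  exact (mul_eq_zero.1 hcoeff.symm).resolve_right (Nat.cast_add_one_ne_zero _)

theorem exists_not_dvd_pderiv_of_squarefree {K : Type*} [Field K] [CharZero K]
    {f p : MvPolynomial σ K} (hf : Squarefree f) (hp : Irreducible p) (hpf : p ∣ f) :
    ∃ i, ¬ p ∣ pderiv i f := by
  obtain ⟨g, rfl⟩ := hpf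
  by_contra! hdvd
  have hpg : ¬ p ∣ g := fun h ↦ hp.not_isUnit (hf p (mul_dvd_mul_left p h))
  have hderiv (i : σ) : pderiv i p = 0 := by
    have hsum := hdvd i
    rw [pderiv_mul, dvd_add_left (dvd_mul_right _ _)] at hsum
    exact pderiv_eq_zero_of_dvd_pderiv ((hp.prime.dvd_or_dvd hsum).resolve_right hpg)
  have hC := eq_C_of_pderiv_eq_zero hderiv
  have hcoeff : coeff 0 p ≠ 0 := fun h ↦ hp.ne_zero (by rw [hC, h, C_0])
  exact hp.not_isUnit (hC ▸ (IsUnit.mk0 _ hcoeff).map C)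

theorem dvd_of_forall_dvd_pderiv [Finite σ] {K : Type*} [Field K] [CharZero K] {d : ℕ}
    (hd : d ≠ 0) {f q : MvPolynomial σ K} (hf : f.IsHomogeneous d) (h : ∀ i, q ∣ pderiv i f) :
    q ∣ f := by
  have := Fintype.ofFinite σ
  have hsmul : q ∣ C (d : K) * f := by
    rw [map_natCast, ← nsmul_eq_mul, ← hf.sum_X_mul_pderiv]
    exact Finset.dvd_sum fun i _ ↦ (h i).mul_left _
  exact ((IsUnit.mk0 (d : K) (Nat.cast_ne_zero.2 hd)).map C).dvd_mul_left.1 hsmul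

theorem isRelPrime_pderiv_of_squarefree {K : Type*} [Field K] [CharZero K] {d : ℕ} (hd : d ≠ 0)
    {f : MvPolynomial (Fin 2) K} (hf : f.IsHomogeneous d) (hsf : Squarefree f) :
    IsRelPrime (pderiv 0 f) (pderiv 1 f) := by
  refine WfDvdMonoid.isRelPrime_of_no_irreducible_factors ?_ fun p hp h0 h1 ↦ ?_
  · rintro ⟨h0, h1⟩
    refine hsf.ne_zero (zero_dvd_iff.1 (dvd_of_forall_dvd_pderiv hd hf ?_))
    simp only [Fin.forall_fin_two, h0, h1, dvd_refl, and_self]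
  · have hdvd : ∀ i, p ∣ pderiv i f := Fin.forall_fin_two.2 ⟨h0, h1⟩
    obtain ⟨i, hi⟩ :=
      exists_not_dvd_pderiv_of_squarefree hsf hp (dvd_of_forall_dvd_pderiv hd hf hdvd)
    exact hi (hdvd i)

end Derivative

section SpanPair

variable {σ R : Type*} [CommRing R]

theorem dvd_homogeneousComponent {a p : MvPolynomial σ R} {m : ℕ} (ha : a.IsHomogeneous m)
    (h : a ∣ p) (k : ℕ) : a ∣ homogeneousComponent k p := by
  let _ := gradedAlgebra (σ := σ) (R := R)
  have hspan : (Ideal.span {a}).IsHomogeneous (homogeneousSubmodule σ R) :=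
    Ideal.homogeneous_span _ _ fun x hx ↦ ⟨m, by rwa [Set.mem_singleton_iff.1 hx]⟩
  exact Ideal.mem_span_singleton.1
    (homogeneousComponent_mem_of_mem hspan (Ideal.mem_span_singleton.2 h) k)

theorem homogeneousComponent_mul_of_isHomogeneous {a : MvPolynomial σ R} {m : ℕ}
    (ha : a.IsHomogeneous m) (q : MvPolynomial σ R) (i : ℕ) :
    homogeneousComponent (m + i) (a * q) = a * homogeneousComponent i q := by
  let _ := gradedAlgebra (σ := σ) (R := R)
  have hdecompose (p : MvPolynomial σ R) (k : ℕ) :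
      (DirectSum.decompose (homogeneousSubmodule σ R) p k : MvPolynomial σ R) =
        homogeneousComponent k p := decomposition.decompose'_apply p k
  have hmul := DirectSum.coe_decompose_mul_add_of_left_mem (homogeneousSubmodule σ R)
    (a := a) (b := q) (i := m) (j := i) ha
  simpa only [hdecompose] using hmul

theorem exists_isHomogeneous_add_eq_of_mem_span_pair {a b u : MvPolynomial σ R} {m n k : ℕ}
    (ha : a.IsHomogeneous m) (hb : b.IsHomogeneous n) (hu : u.IsHomogeneous k)
    (h : u ∈ Ideal.span {a, b}) :
    ∃ x y, x.IsHomogeneous k ∧ y.IsHomogeneous k ∧ a ∣ x ∧ b ∣ y ∧ x + y = u := by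
  obtain ⟨α, β, hαβ⟩ := Ideal.mem_span_pair.1 h
  refine ⟨homogeneousComponent k (α * a), homogeneousComponent k (β * b),
    homogeneousComponent_isHomogeneous _ _, homogeneousComponent_isHomogeneous _ _,
    dvd_homogeneousComponent ha (dvd_mul_left _ _) k,
    dvd_homogeneousComponent hb (dvd_mul_left _ _) k, ?_⟩
  rw [← map_add, hαβ, homogeneousComponent_eq_self hu]

variable [IsDomain R]

theorem eq_zero_of_dvd_of_degree_lt {a p : MvPolynomial σ R} {m k : ℕ} (ha : a.IsHomogeneous m)
    (hp : p.IsHomogeneous k) (h : a ∣ p) (hlt : k < m) : p = 0 := by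
  by_contra hp0
  have hle := totalDegree_le_of_dvd_of_isDomain h hp0
  rw [ha.totalDegree (ne_zero_of_dvd_ne_zero hp0 h), hp.totalDegree hp0] at hle
  exact hle.not_gt hlt

theorem eq_zero_of_mem_span_pair_of_degree_lt {a b u : MvPolynomial σ R} {m n k : ℕ}
    (ha : a.IsHomogeneous m) (hb : b.IsHomogeneous n) (hu : u.IsHomogeneous k)
    (h : u ∈ Ideal.span {a, b}) (hm : k < m) (hn : k < n) : u = 0 := by
  obtain ⟨x, y, hx, hy, hax, hby, rfl⟩ :=
    exists_isHomogeneous_add_eq_of_mem_span_pair ha hb hu h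
  rw [eq_zero_of_dvd_of_degree_lt ha hx hax hm, eq_zero_of_dvd_of_degree_lt hb hy hby hn, add_zero]

theorem ne_zero_of_isRelPrime_of_degree_pos {a b : MvPolynomial σ R} {n : ℕ}
    (hb : b.IsHomogeneous n) (hn : 0 < n) (hab : IsRelPrime a b) : a ≠ 0 := by
  rintro rfl
  have hdvd : b ∣ 1 := (isRelPrime_zero_left.1 hab).dvd
  exact one_ne_zero (eq_zero_of_dvd_of_degree_lt hb (isHomogeneous_one σ R) hdvd hn)

theorem exists_dvd_eq_mul_X_of_mul_X_eq {a x y : MvPolynomial σ R} {i j : σ} (hij : i ≠ j)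
    (hx : a ∣ x) (hy : a ∣ y) (h : x * X j = y * X i) : ∃ z, a ∣ z ∧ x = z * X i := by
  obtain ⟨α, rfl⟩ := hx
  obtain ⟨β, rfl⟩ := hy
  rcases eq_or_ne a 0 with rfl | ha
  · exact ⟨0, dvd_rfl, by rw [zero_mul, zero_mul]⟩
  have hαβ : α * X j = β * X i := mul_left_cancel₀ ha (by simpa only [mul_assoc] using h)
  have hXj : ¬ (X i : MvPolynomial σ R) ∣ X j := by rwa [X_dvd_X]
  obtain ⟨γ, rfl⟩ := (X_prime.dvd_or_dvd ⟨β, by rw [hαβ, mul_comm]⟩).resolve_right hXj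
  exact ⟨a * γ, dvd_mul_right _ _, by ring⟩

variable [UniqueFactorizationMonoid R] {a b u : MvPolynomial σ R} {m n k : ℕ}

theorem eq_zero_of_isRelPrime_of_dvd_of_dvd (ha : a.IsHomogeneous m) (hb : b.IsHomogeneous n)
    (hab : IsRelPrime a b) (hu : u.IsHomogeneous k) (hau : a ∣ u) (hbu : b ∣ u)
    (hk : k < m + n) : u = 0 :=
  eq_zero_of_dvd_of_degree_lt (ha.mul hb) hu (hab.mul_dvd hau hbu) hk

theorem mem_span_pair_of_mul_X_mem (ha : a.IsHomogeneous m) (hb : b.IsHomogeneous n)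
    (hab : IsRelPrime a b) (hu : u.IsHomogeneous k) (hk : k + 2 < m + n) {i j : σ} (hij : i ≠ j)
    (hi : u * X i ∈ Ideal.span {a, b}) (hj : u * X j ∈ Ideal.span {a, b}) :
    u ∈ Ideal.span {a, b} := by
  obtain ⟨x, y, hx, -, hax, hby, hxy⟩ :=
    exists_isHomogeneous_add_eq_of_mem_span_pair ha hb (hu.mul (isHomogeneous_X R i)) hi
  obtain ⟨z, w, hz, -, haz, hbw, hzw⟩ :=
    exists_isHomogeneous_add_eq_of_mem_span_pair ha hb (hu.mul (isHomogeneous_X R j)) hj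
  -- `x * X j - z * X i` is divisible by `a` and, by `hsyz`, also by `b`, but its degree is too
  -- small for a nonzero multiple of `a * b`.
  have hsyz : x * X j - z * X i = -(y * X j - w * X i) := by
    linear_combination X j * hxy - X i * hzw
  have hzero : x * X j - z * X i = 0 :=
    eq_zero_of_isRelPrime_of_dvd_of_dvd ha hb hab
      ((hx.mul (isHomogeneous_X R j)).sub (hz.mul (isHomogeneous_X R i)))
      (dvd_sub (hax.mul_right _) (haz.mul_right _))
      (hsyz ▸ (dvd_sub (hby.mul_right _) (hbw.mul_right _)).neg_right) hk
  obtain ⟨x', hax', rfl⟩ := exists_dvd_eq_mul_X_of_mul_X_eq hij hax haz (sub_eq_zero.1 hzero)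
  obtain ⟨y', hby', rfl⟩ := exists_dvd_eq_mul_X_of_mul_X_eq hij hby hbw
    (sub_eq_zero.1 (neg_eq_zero.1 (hsyz ▸ hzero)))
  obtain ⟨α, rfl⟩ := hax'
  obtain ⟨β, rfl⟩ := hby'
  exact Ideal.mem_span_pair.2 ⟨α, β, mul_right_cancel₀ (X_ne_zero i) (by linear_combination hxy)⟩

theorem mem_span_pair_of_forall_mul_mem [Nontrivial σ] (ha : a.IsHomogeneous m)
    (hb : b.IsHomogeneous n) (hab : IsRelPrime a b) {l : ℕ} (hu : u.IsHomogeneous k)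
    (hk : k + l + 2 ≤ m + n)
    (h : ∀ v : MvPolynomial σ R, v.IsHomogeneous l → u * v ∈ Ideal.span {a, b}) :
    u ∈ Ideal.span {a, b} := by
  induction l generalizing u k with
  | zero => simpa only [mul_one] using h 1 (isHomogeneous_one σ R)
  | succ l ih =>
    obtain ⟨i, j, hij⟩ := exists_pair_ne σ
    have hX (s : σ) : u * X s ∈ Ideal.span {a, b} :=
      ih (hu.mul (isHomogeneous_X R s)) (by omega) fun v hv ↦ by
        rw [mul_assoc]
        exact h _ (add_comm 1 l ▸ (isHomogeneous_X R s).mul hv)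
    exact mem_span_pair_of_mul_X_mem ha hb hab hu (by omega) hij (hX i) (hX j)

end SpanPair

section Dimension

theorem finrank_homogeneousSubmodule (σ R : Type*) [Fintype σ] [CommRing R] [Nontrivial R]
    (n : ℕ) : Module.finrank R (homogeneousSubmodule σ R n) = (Fintype.card σ).multichoose n := by
  classical
  let e : {s : σ →₀ ℕ | s.degree = n} ≃ Sym σ n := (Sym.equivNatSum σ n).symm
  have : Fintype {s : σ →₀ ℕ | s.degree = n} := Fintype.ofEquiv _ e.symm
  rw [homogeneousSubmodule_eq_finsupp_supported,
    (AddMonoidAlgebra.supportedEquivFinsupp _).finrank_eq, Module.finrank_finsupp_self,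
    Fintype.card_congr e, Sym.card_sym_eq_multichoose]

variable {K : Type*} [Field K]

theorem exists_dual_eq_one_of_finrank_add_one_eq {V : Type*} [AddCommGroup V] [Module K V]
    {S W : Submodule K V} [FiniteDimensional K S] (hWS : W ≤ S)
    (hrank : Module.finrank K W + 1 = Module.finrank K S) :
    ∃ φ : Module.Dual K V, ∃ h ∈ S, φ h = 1 ∧ ∀ x ∈ S, φ x = 0 ↔ x ∈ W := by
  have hlt : W < S := hWS.lt_of_ne fun h ↦ by rw [h] at hrank; omega
  obtain ⟨x, hxS, hxW⟩ := SetLike.exists_of_lt hlt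
  obtain ⟨φ, hφx, hWφ⟩ := W.exists_le_ker_of_notMem hxW
  have hker_lt : φ.ker ⊓ S < S := inf_le_right.lt_of_ne fun h ↦ hφx (inf_eq_right.1 h hxS)
  have hker_rank := Submodule.finrank_lt_finrank_of_lt hker_lt
  have hker : W = φ.ker ⊓ S :=
    Submodule.eq_of_le_of_finrank_le (le_inf hWφ hWS) (by omega)
  refine ⟨φ, (φ x)⁻¹ • x, S.smul_mem _ hxS, ?_, fun y hy ↦ ?_⟩
  · rw [map_smul, smul_eq_mul, inv_mul_cancel₀ hφx]
  · rw [hker, Submodule.mem_inf, LinearMap.mem_ker, and_iff_left hy]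

/-- The degree-`k` part of an ideal, encoded as a `K`-subspace of the whole polynomial ring so that
dimensions of parts of different ideals can be compared inside one ambient space. -/
noncomputable def degreePart {σ : Type*} (I : Ideal (MvPolynomial σ K)) (k : ℕ) :
    Submodule K (MvPolynomial σ K) :=
  I.restrictScalars K ⊓ homogeneousSubmodule σ K k

theorem degreePart_span_singleton_add {σ : Type*} {a : MvPolynomial σ K} {m : ℕ}
    (ha : a.IsHomogeneous m) (i : ℕ) :
    degreePart (Ideal.span {a}) (m + i) =
      (homogeneousSubmodule σ K i).map (LinearMap.mulLeft K a) := by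
  ext p
  constructor
  · rintro ⟨hap, hp⟩
    obtain ⟨q, rfl⟩ := Ideal.mem_span_singleton.1 hap
    refine ⟨homogeneousComponent i q, homogeneousComponent_isHomogeneous i q, ?_⟩
    rw [LinearMap.mulLeft_apply, ← homogeneousComponent_mul_of_isHomogeneous ha,
      homogeneousComponent_eq_self hp]
  · rintro ⟨q, hq, rfl⟩
    exact ⟨Ideal.mem_span_singleton.2 (dvd_mul_right a q), ha.mul hq⟩

theorem degreePart_span_pair {σ : Type*} {a b : MvPolynomial σ K} {m n : ℕ}
    (ha : a.IsHomogeneous m) (hb : b.IsHomogeneous n) (k : ℕ) :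
    degreePart (Ideal.span {a, b}) k =
      degreePart (Ideal.span {a}) k ⊔ degreePart (Ideal.span {b}) k := by
  refine le_antisymm (fun p hp ↦ ?_) (sup_le ?_ ?_)
  · obtain ⟨x, y, hx, hy, hax, hby, rfl⟩ :=
      exists_isHomogeneous_add_eq_of_mem_span_pair ha hb hp.2 hp.1
    exact Submodule.add_mem_sup ⟨Ideal.mem_span_singleton.2 hax, hx⟩
      ⟨Ideal.mem_span_singleton.2 hby, hy⟩
  · exact inf_le_inf_right _ (Ideal.span_mono (by simp))
  · exact inf_le_inf_right _ (Ideal.span_mono (by simp))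

instance finiteDimensional_homogeneousSubmodule (σ : Type*) [Finite σ] (k : ℕ) :
    FiniteDimensional K (homogeneousSubmodule σ K k) :=
  Module.Finite.of_fg (homogeneousSubmodule_fg σ K k)

instance finiteDimensional_degreePart {σ : Type*} [Finite σ] (I : Ideal (MvPolynomial σ K))
    (k : ℕ) : FiniteDimensional K (degreePart I k) :=
  Submodule.finiteDimensional_of_le inf_le_right

theorem finrank_homogeneousSubmodule_fin_two (n : ℕ) :
    Module.finrank K (homogeneousSubmodule (Fin 2) K n) = n + 1 := by
  rw [finrank_homogeneousSubmodule, Fintype.card_fin, Nat.multichoose_two]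

theorem finrank_degreePart_span_singleton {a : MvPolynomial (Fin 2) K} {m : ℕ}
    (ha : a.IsHomogeneous m) (ha0 : a ≠ 0) (k : ℕ) :
    Module.finrank K (degreePart (Ideal.span {a}) k) = k + 1 - m := by
  rcases lt_or_ge k m with hkm | hmk
  · have hbot : degreePart (Ideal.span {a}) k = ⊥ := (Submodule.eq_bot_iff _).2 fun p hp ↦
      eq_zero_of_dvd_of_degree_lt ha hp.2 (Ideal.mem_span_singleton.1 hp.1) hkm
    rw [hbot, finrank_bot]
    omega
  · obtain ⟨i, rfl⟩ := Nat.exists_eq_add_of_le hmk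
    rw [degreePart_span_singleton_add ha, ← (Submodule.equivMapOfInjective _
      (mul_right_injective₀ ha0) (homogeneousSubmodule (Fin 2) K i)).finrank_eq,
      finrank_homogeneousSubmodule_fin_two]
    omega

theorem finrank_degreePart_span_pair_add_one {a b : MvPolynomial (Fin 2) K} {m n k : ℕ}
    (ha : a.IsHomogeneous m) (hb : b.IsHomogeneous n) (hab : IsRelPrime a b) (hm : 0 < m)
    (hn : 0 < n) (hk : k + 2 = m + n) :
    Module.finrank K (degreePart (Ideal.span {a, b}) k) + 1 =
      Module.finrank K (homogeneousSubmodule (Fin 2) K k) := by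
  have ha0 : a ≠ 0 := ne_zero_of_isRelPrime_of_degree_pos hb hn hab
  have hb0 : b ≠ 0 := ne_zero_of_isRelPrime_of_degree_pos ha hm hab.symm
  have hinf : degreePart (Ideal.span {a}) k ⊓ degreePart (Ideal.span {b}) k = ⊥ :=
    (Submodule.eq_bot_iff _).2 fun p hp ↦
      eq_zero_of_isRelPrime_of_dvd_of_dvd ha hb hab hp.1.2 (Ideal.mem_span_singleton.1 hp.1.1)
        (Ideal.mem_span_singleton.1 hp.2.1) (by omega)
  have hsum := Submodule.finrank_sup_add_finrank_inf_eq
    (degreePart (Ideal.span {a}) k) (degreePart (Ideal.span {b}) k)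
  rw [hinf, finrank_bot, ← degreePart_span_pair ha hb, finrank_degreePart_span_singleton ha ha0,
    finrank_degreePart_span_singleton hb hb0] at hsum
  rw [finrank_homogeneousSubmodule_fin_two]
  omega

end Dimension

theorem exists_mul_pairing_of_isRelPrime {K : Type*} [Field K] {a b : MvPolynomial (Fin 2) K}
    {m n i j : ℕ} (ha : a.IsHomogeneous m) (hb : b.IsHomogeneous n) (hab : IsRelPrime a b)
    (hm : 0 < m) (hn : 0 < n) (hij : i + j + 2 = m + n) :
    ∃ h : MvPolynomial (Fin 2) K, h.IsHomogeneous (i + j) ∧ h ∉ Ideal.span {a, b} ∧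
      ∃ lam : homogeneousSubmodule (Fin 2) K i →ₗ[K] homogeneousSubmodule (Fin 2) K j →ₗ[K] K,
        (∀ u v, (u * v - lam u v • h : MvPolynomial (Fin 2) K) ∈ Ideal.span {a, b}) ∧
        (∀ u, (∀ v, lam u v = 0) ↔ (u : MvPolynomial (Fin 2) K) ∈ Ideal.span {a, b}) ∧
        (∀ v, (∀ u, lam u v = 0) ↔ (v : MvPolynomial (Fin 2) K) ∈ Ideal.span {a, b}) := by
  obtain ⟨φ, h, hh, hφh, hφ⟩ :=
    exists_dual_eq_one_of_finrank_add_one_eq inf_le_right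
      (finrank_degreePart_span_pair_add_one ha hb hab hm hn hij)
  replace hφ {p : MvPolynomial (Fin 2) K} (hp : p.IsHomogeneous (i + j)) :
      φ p = 0 ↔ p ∈ Ideal.span {a, b} := (hφ p hp).trans (and_iff_left hp)
  have hφmul (u : homogeneousSubmodule (Fin 2) K i) (v : homogeneousSubmodule (Fin 2) K j) :
      φ (u * v) = 0 ↔ (u * v : MvPolynomial (Fin 2) K) ∈ Ideal.span {a, b} := hφ (u.2.mul v.2)
  refine ⟨h, hh, fun hmem ↦ one_ne_zero (hφh.symm.trans ((hφ hh).2 hmem)),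
    ((LinearMap.mul K _).compr₂ φ).domRestrict₁₂ _ _, fun u v ↦ ?_, fun u ↦ ?_, fun v ↦ ?_⟩
  all_goals simp only [LinearMap.domRestrict₁₂_apply, LinearMap.compr₂_apply,
    LinearMap.mul_apply', hφmul]
  · refine (hφ ((u.2.mul v.2).sub ((homogeneousSubmodule (Fin 2) K _).smul_mem _ hh))).1 ?_
    rw [map_sub, map_smul, hφh, smul_eq_mul, mul_one, sub_self]
  · exact ⟨fun huv ↦ mem_span_pair_of_forall_mul_mem ha hb hab u.2 hij.le
      fun v hv ↦ huv ⟨v, hv⟩, fun hu v ↦ Ideal.mul_mem_right _ _ hu⟩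
  · exact ⟨fun huv ↦ mem_span_pair_of_forall_mul_mem ha hb hab v.2 (by omega)
      fun u hu ↦ mul_comm u (v : MvPolynomial (Fin 2) K) ▸ huv ⟨u, hu⟩,
      fun hv u ↦ Ideal.mul_mem_left _ _ hv⟩

section Jacobian

variable {R : Type*} [CommRing R]

/-- The Jacobian ideal of a polynomial: the ideal generated by all its first-order partial
derivatives, the polynomial itself not being included among the generators. -/
noncomputable def jacobianIdeal {σ : Type*} (f : MvPolynomial σ R) : Ideal (MvPolynomial σ R) :=
  Ideal.span (Set.range fun i ↦ pderiv i f)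

/-- The equation `Y ^ d - f` of the degree-`d` cyclic cover branched along `f = 0`, the new
variable `Y` being the one of index `0`. -/
noncomputable def cyclicCover {n : ℕ} (d : ℕ) (f : MvPolynomial (Fin n) R) :
    MvPolynomial (Fin (n + 1)) R :=
  X 0 ^ d - rename Fin.succ f

theorem jacobianIdeal_fin_two (f : MvPolynomial (Fin 2) R) :
    jacobianIdeal f = Ideal.span {pderiv 0 f, pderiv 1 f} := by
  rw [jacobianIdeal]
  congr 1
  ext p
  simp only [Set.mem_range, Fin.exists_fin_two, Set.mem_insert_iff, Set.mem_singleton_iff, eq_comm]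

theorem jacobianIdeal_fin_three (f : MvPolynomial (Fin 3) R) :
    jacobianIdeal f = Ideal.span {pderiv 0 f, pderiv 1 f, pderiv 2 f} := by
  rw [jacobianIdeal]
  congr 1
  ext p
  simp [Fin.exists_fin_succ, eq_comm]

variable {n d : ℕ} {f p : MvPolynomial (Fin n) R}

theorem finSuccEquiv_rename_succ (p : MvPolynomial (Fin n) R) :
    finSuccEquiv R n (rename Fin.succ p) = Polynomial.C p := by
  have hcomp : (finSuccEquiv R n).toAlgHom.comp (rename Fin.succ) =
      IsScalarTower.toAlgHom R (MvPolynomial (Fin n) R) (Polynomial (MvPolynomial (Fin n) R)) :=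
    algHom_ext fun i ↦ by simp [finSuccEquiv_X_succ]
  exact DFunLike.congr_fun hcomp p

theorem pderiv_zero_cyclicCover (d : ℕ) (f : MvPolynomial (Fin n) R) :
    pderiv 0 (cyclicCover d f) = (d : MvPolynomial (Fin (n + 1)) R) * X 0 ^ (d - 1) := by
  have hvars : (0 : Fin (n + 1)) ∉ (rename Fin.succ f).vars := fun h ↦ by
    classical
    obtain ⟨i, -, hi⟩ := Finset.mem_image.1 (vars_rename Fin.succ f h)
    exact Fin.succ_ne_zero i hi
  rw [cyclicCover, map_sub, pderiv_eq_zero_of_notMem_vars hvars, sub_zero, pderiv_pow,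
    pderiv_X_self, mul_one]

theorem pderiv_succ_cyclicCover (d : ℕ) (f : MvPolynomial (Fin n) R) (i : Fin n) :
    pderiv i.succ (cyclicCover d f) = -rename Fin.succ (pderiv i f) := by
  rw [cyclicCover, map_sub, pderiv_rename (Fin.succ_injective n), pderiv_pow,
    pderiv_X_of_ne (Fin.succ_ne_zero i).symm, mul_zero, zero_sub]

theorem rename_mem_jacobianIdeal_cyclicCover (d : ℕ) (hp : p ∈ jacobianIdeal f) :
    rename Fin.succ p ∈ jacobianIdeal (cyclicCover d f) := by
  suffices jacobianIdeal f ≤ (jacobianIdeal (cyclicCover d f)).comap (rename Fin.succ) from this hp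
  refine Ideal.span_le.2 ?_
  rintro _ ⟨i, rfl⟩
  have hmem : pderiv i.succ (cyclicCover d f) ∈ jacobianIdeal (cyclicCover d f) :=
    Ideal.subset_span (Set.mem_range_self i.succ)
  rw [pderiv_succ_cyclicCover] at hmem
  exact (neg_mem_iff (x := rename Fin.succ (pderiv i f))).1 hmem

theorem coeff_finSuccEquiv_mem_jacobianIdeal {q : MvPolynomial (Fin (n + 1)) R}
    (hq : q ∈ jacobianIdeal (cyclicCover d f)) {j : ℕ} (hj : j + 1 < d) :
    (finSuccEquiv R n q).coeff j ∈ jacobianIdeal f := by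
  induction hq using Submodule.span_induction generalizing j with
  | mem x hx =>
    obtain ⟨i, rfl⟩ := hx
    refine Fin.cases ?_ (fun i ↦ ?_) i
    · have hcoeff : (Polynomial.X ^ (d - 1) : Polynomial (MvPolynomial (Fin n) R)).coeff j = 0 := by
        rw [Polynomial.coeff_X_pow, if_neg (by omega)]
      simp only [pderiv_zero_cyclicCover, map_mul, map_natCast, map_pow, finSuccEquiv_X_zero,
        Polynomial.coeff_natCast_mul, hcoeff, mul_zero, zero_mem]
    · simp only [pderiv_succ_cyclicCover, map_neg, finSuccEquiv_rename_succ, Polynomial.coeff_neg,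
        neg_mem_iff, Polynomial.coeff_C]
      split_ifs
      · exact Ideal.subset_span (Set.mem_range_self i)
      · exact zero_mem _
  | zero => rw [map_zero, Polynomial.coeff_zero]; exact zero_mem _
  | add x y _ _ hx hy => rw [map_add, Polynomial.coeff_add]; exact add_mem (hx hj) (hy hj)
  | smul r x _ hx =>
    rw [smul_eq_mul, map_mul, Polynomial.coeff_mul]
    refine sum_mem fun s hs ↦ Ideal.mul_mem_left _ _ (hx ?_)
    have hle : s.2 ≤ j := Nat.lt_succ_iff.1 (Finset.Nat.antidiagonal.snd_lt hs)
    omega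

theorem X_pow_mul_rename_mem_jacobianIdeal_cyclicCover_iff {j : ℕ} (hj : j + 1 < d) :
    X 0 ^ j * rename Fin.succ p ∈ jacobianIdeal (cyclicCover d f) ↔ p ∈ jacobianIdeal f := by
  refine ⟨fun h ↦ ?_, fun h ↦ Ideal.mul_mem_left _ _ (rename_mem_jacobianIdeal_cyclicCover d h)⟩
  simpa only [map_mul, map_pow, finSuccEquiv_X_zero, finSuccEquiv_rename_succ,
    Polynomial.coeff_X_pow_mul', le_refl, if_true, Nat.sub_self, Polynomial.coeff_C_zero] using
    coeff_finSuccEquiv_mem_jacobianIdeal h hj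

end Jacobian

theorem jacIdealS_eq_jacobianIdeal (f : MvPolynomial (Fin 2) ℂ) :
    jacIdealS f = jacobianIdeal f :=
  (jacobianIdeal_fin_two f).symm

theorem jacIdealT_eq_jacobianIdeal (d : ℕ) (f : MvPolynomial (Fin 2) ℂ) :
    jacIdealT d f = jacobianIdeal (cyclicCover d f) :=
  (jacobianIdeal_fin_three (cyclicCover d f)).symm

theorem stmt11_general {K : Type*} [Field K] {d : ℕ} (hd : 4 ≤ d) {f : MvPolynomial (Fin 2) K}
    (hf : f.IsHomogeneous d) (hsm : IsRelPrime (pderiv 0 f) (pderiv 1 f)) :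
    ∃ h : MvPolynomial (Fin 2) K, h.IsHomogeneous (2 * d - 4) ∧
      X 0 * rename Fin.succ h ∉ jacobianIdeal (cyclicCover d f) ∧
      ∃ lam : homogeneousSubmodule (Fin 2) K d →ₗ[K]
          homogeneousSubmodule (Fin 2) K (d - 4) →ₗ[K] K,
        (∀ (u : homogeneousSubmodule (Fin 2) K d) (v : homogeneousSubmodule (Fin 2) K (d - 4)),
          rename Fin.succ (u : MvPolynomial (Fin 2) K) *
              (X 0 * rename Fin.succ (v : MvPolynomial (Fin 2) K)) -
            lam u v • (X 0 * rename Fin.succ h) ∈ jacobianIdeal (cyclicCover d f)) ∧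
        (∀ u : homogeneousSubmodule (Fin 2) K d,
          (∀ v, lam u v = 0) ↔ (u : MvPolynomial (Fin 2) K) ∈ jacobianIdeal f) ∧
        (∀ v : homogeneousSubmodule (Fin 2) K (d - 4),
          (∀ u, lam u v = 0) ↔ (v : MvPolynomial (Fin 2) K) = 0) := by
  have hdeg : d + (d - 4) = 2 * d - 4 := by omega
  have hX_mul (p : MvPolynomial (Fin 2) K) :
      X 0 * rename Fin.succ p ∈ jacobianIdeal (cyclicCover d f) ↔ p ∈ jacobianIdeal f := by
    simpa only [pow_one] using
      X_pow_mul_rename_mem_jacobianIdeal_cyclicCover_iff (f := f) (p := p) (j := 1)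
        (show 1 + 1 < d by omega)
  obtain ⟨h, hh, hhJ, lam, hlam, hleft, hright⟩ :=
    exists_mul_pairing_of_isRelPrime (i := d) (j := d - 4) (hf.pderiv (i := 0)) (hf.pderiv (i := 1))
      hsm (by omega) (by omega) (by omega)
  simp only [← jacobianIdeal_fin_two] at hhJ hlam hleft hright
  refine ⟨h, hdeg ▸ hh, (hX_mul h).not.2 hhJ, lam, fun u v ↦ ?_, hleft, fun v ↦
    (hright v).trans ⟨fun hv ↦ ?_, fun hv ↦ hv ▸ zero_mem _⟩⟩
  · have hmem := (hX_mul _).2 (hlam u v)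
    rw [map_sub, map_mul, map_smul, mul_sub, mul_smul_comm] at hmem
    rwa [mul_left_comm]
  · exact eq_zero_of_mem_span_pair_of_degree_lt (hf.pderiv (i := 0)) (hf.pderiv (i := 1)) v.2
      (jacobianIdeal_fin_two f ▸ hv) (by omega) (by omega)

/-- Let `f ∈ ℂ[X₀,X₁]` be homogeneous of degree `d ≥ 4` and squarefree, and
`F = Y^d − f(X₀,X₁)`.  Then there are `h ∈ S^{2d−4}` with `Y·h ∉ J_F` and a bilinear map
`λ : S^d × S^{d−4} → ℂ` such that: (1) `u·Y·v − λ(u,v)·Y·h ∈ J_F` for all `u ∈ S^d`,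
`v ∈ S^{d−4}`; (2) `λ(u,·) = 0` iff `u ∈ J_f`; (3) `λ(·,v) = 0` iff `v = 0`. -/
theorem stmt11 (d : ℕ) (hd : 4 ≤ d) (f : MvPolynomial (Fin 2) ℂ)
    (hf : f.IsHomogeneous d) (hsf : Squarefree f) :
    ∃ h : MvPolynomial (Fin 2) ℂ, h.IsHomogeneous (2 * d - 4) ∧
      X 0 * embS h ∉ jacIdealT d f ∧
      ∃ lam : (homogeneousSubmodule (Fin 2) ℂ d) →ₗ[ℂ]
          (homogeneousSubmodule (Fin 2) ℂ (d - 4)) →ₗ[ℂ] ℂ,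
        (∀ (u : homogeneousSubmodule (Fin 2) ℂ d)
            (v : homogeneousSubmodule (Fin 2) ℂ (d - 4)),
          embS (u : MvPolynomial (Fin 2) ℂ) * (X 0 * embS (v : MvPolynomial (Fin 2) ℂ)) -
              lam u v • (X 0 * embS h) ∈ jacIdealT d f) ∧
        (∀ u : homogeneousSubmodule (Fin 2) ℂ d,
          (∀ v, lam u v = 0) ↔ (u : MvPolynomial (Fin 2) ℂ) ∈ jacIdealS f) ∧
        (∀ v : homogeneousSubmodule (Fin 2) ℂ (d - 4),
          (∀ u, lam u v = 0) ↔ (v : MvPolynomial (Fin 2) ℂ) = 0) := by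
  rw [jacIdealS_eq_jacobianIdeal, jacIdealT_eq_jacobianIdeal]
  exact stmt11_general hd hf (isRelPrime_pderiv_of_squarefree (by omega) hf hsf)
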